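/- Fix x ∈ ℝ, and let F_n'(x) denote the derivative in x of F_n(x) = Φ(h_n)^{n} − (1 − Φ(h_n))^{n} where h_n = (c_n x + d_n)^{1/2}, with c_n = 2 − 2b_n^{−2} and d_n = b_n² − 2b_n^{−2}, defined for n large enough that c_n x + d_n > 0. Then as n → ∞, F_n'(x) = Λ(x) e^{−x} ( 1 + b_n^{−4} ( ϖ + b_n^{−2} τ + O(b_n^{−4}) ) ), where ϖ = 1/2 + x + x² − e^{−x}(7/2 + 3x + x²) and τ = e^{−x}(43/3 + 14x + 6x² + (4/3) x³) − (1/3 + 2x + 2x² + (4/3) x³). -/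

import Mathlib

open Real Filter Topology

/-- The standard normal distribution function. -/
noncomputable def stdNormalCDF (x : ℝ) : ℝ :=
  ∫ u in Set.Iic x, Real.exp (-u ^ 2 / 2) / Real.sqrt (2 * Real.pi)

/-- The Gumbel distribution function `Λ(x) = exp(−e^{−x})`. -/
noncomputable def gumbel (x : ℝ) : ℝ := Real.exp (-Real.exp (-x))

/-!
Put `ε = b_n⁻²`. Since `n φ(b_n) = b_n`, the quantity `n φ(h_n) / h_n` is an explicit analytic
function of `ε`, and the alternating expansion of the Mills ratio turns `n (1 - Φ(h_n))` into an
explicit function of `ε` up to `O(ε^m)`, for every `m`. As `n² = 2π ε⁻¹ exp(ε⁻¹)`, the error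
`O(1/n)` in `Φ(h_n)^(n-1) ≈ exp(-n (1 - Φ(h_n)))` is smaller than every power of `ε`. Hence
`F_n'(x)` agrees up to `O(ε⁴)` with an explicit function of `ε`, whose third-order expansion at
`0` has no linear term and has `ϖ` and `τ` as its relative quadratic and cubic coefficients.
-/

open Asymptotics ProbabilityTheory
open scoped Nat

/-! ### Third-order expansions at zero -/

/-- The third-order expansion `f v = a₀ + a₁ v + a₂ v² + a₃ v³ + O(v⁴)` as `v → 0`. It is a growth
condition only, so that expansions can be multiplied and composed without differentiating. -/
def HasCubicExpansion (f : ℝ → ℝ) (a₀ a₁ a₂ a₃ : ℝ) : Prop :=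
  (fun v => f v - (a₀ + a₁ * v + a₂ * v ^ 2 + a₃ * v ^ 3)) =O[𝓝 0] fun v => v ^ 4

namespace HasCubicExpansion

variable {f g : ℝ → ℝ} {a₀ a₁ a₂ a₃ c₀ c₁ c₂ c₃ : ℝ}

theorem congr_coeff (hf : HasCubicExpansion f a₀ a₁ a₂ a₃) (h₀ : a₀ = c₀) (h₁ : a₁ = c₁)
    (h₂ : a₂ = c₂) (h₃ : a₃ = c₃) : HasCubicExpansion f c₀ c₁ c₂ c₃ :=
  h₀ ▸ h₁ ▸ h₂ ▸ h₃ ▸ hf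

theorem polynomial (a₀ a₁ a₂ a₃ : ℝ) :
    HasCubicExpansion (fun v => a₀ + a₁ * v + a₂ * v ^ 2 + a₃ * v ^ 3) a₀ a₁ a₂ a₃ := by
  simpa only [HasCubicExpansion, sub_self] using isBigO_zero _ _

theorem const (c : ℝ) : HasCubicExpansion (fun _ => c) c 0 0 0 := by
  simpa only [zero_mul, add_zero] using polynomial c 0 0 0

theorem of_hasFPowerSeriesAt {p : FormalMultilinearSeries ℝ ℝ ℝ} (hf : HasFPowerSeriesAt f p 0) :
    HasCubicExpansion f (p.coeff 0) (p.coeff 1) (p.coeff 2) (p.coeff 3) := by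
  refine (hf.isBigO_sub_partialSum_pow 4).congr (fun v => ?_) (fun v => ?_) |>.trans
    (isBigO_refl _ _).norm_left
  · simp only [zero_add, FormalMultilinearSeries.partialSum,
      FormalMultilinearSeries.apply_eq_prod_smul_coeff, Finset.prod_const, Finset.card_univ,
      Fintype.card_fin, smul_eq_mul, Finset.sum_range_succ, Finset.sum_range_zero, pow_zero]
    ring
  · simp

theorem add (hf : HasCubicExpansion f a₀ a₁ a₂ a₃) (hg : HasCubicExpansion g c₀ c₁ c₂ c₃) :
    HasCubicExpansion (fun v => f v + g v) (a₀ + c₀) (a₁ + c₁) (a₂ + c₂) (a₃ + c₃) :=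
  (IsBigO.add hf hg).congr_left fun v => by ring

theorem const_mul (k : ℝ) (hf : HasCubicExpansion f a₀ a₁ a₂ a₃) :
    HasCubicExpansion (fun v => k * f v) (k * a₀) (k * a₁) (k * a₂) (k * a₃) :=
  (IsBigO.const_mul_left hf k).congr_left fun v => by ring

theorem neg (hf : HasCubicExpansion f a₀ a₁ a₂ a₃) :
    HasCubicExpansion (fun v => -f v) (-a₀) (-a₁) (-a₂) (-a₃) := by
  simpa only [neg_one_mul] using hf.const_mul (-1)

theorem sub_const_isBigO (hf : HasCubicExpansion f a₀ a₁ a₂ a₃) :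
    (fun v => f v - a₀) =O[𝓝 0] fun v => v := by
  have hpoly : (fun v : ℝ => v * (a₁ + a₂ * v + a₃ * v ^ 2)) =O[𝓝 0] fun v => v := by
    have hcont : Continuous fun v : ℝ => a₁ + a₂ * v + a₃ * v ^ 2 := by fun_prop
    simpa only [mul_one] using (isBigO_refl (fun v : ℝ => v) _).mul
      ((hcont.tendsto 0).isBigO_one ℝ)
  have hpow : (fun v : ℝ => v ^ 4) =O[𝓝 0] fun v => v := by
    simpa only [pow_one] using (isLittleO_pow_pow (show 1 < 4 by norm_num)).isBigO
  exact ((IsBigO.trans hf hpow).add hpoly).congr_left fun v => by ring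

theorem tendsto (hf : HasCubicExpansion f a₀ a₁ a₂ a₃) : Tendsto f (𝓝 0) (𝓝 a₀) :=
  tendsto_sub_nhds_zero_iff.mp (hf.sub_const_isBigO.trans_tendsto tendsto_id)

theorem mul (hf : HasCubicExpansion f a₀ a₁ a₂ a₃) (hg : HasCubicExpansion g c₀ c₁ c₂ c₃) :
    HasCubicExpansion (fun v => f v * g v) (a₀ * c₀) (a₀ * c₁ + a₁ * c₀)
      (a₀ * c₂ + a₁ * c₁ + a₂ * c₀) (a₀ * c₃ + a₁ * c₂ + a₂ * c₁ + a₃ * c₀) := by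
  have hleft := (hf.tendsto.isBigO_one ℝ).mul hg
  have hright := IsBigO.mul hf ((polynomial c₀ c₁ c₂ c₃).tendsto.isBigO_one ℝ)
  have hcont : Continuous fun v : ℝ =>
      a₁ * c₃ + a₂ * c₂ + a₃ * c₁ + (a₂ * c₃ + a₃ * c₂) * v + a₃ * c₃ * v ^ 2 := by fun_prop
  have hhigh := ((hcont.tendsto 0).isBigO_one ℝ).mul (isBigO_refl (fun v : ℝ => v ^ 4) _)
  simp only [one_mul, mul_one] at hleft hright hhigh
  exact ((hleft.add hright).add hhigh).congr_left fun v => by ring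

theorem comp {G : ℝ → ℝ} (hG : HasCubicExpansion (fun v => G (a₀ + v)) c₀ c₁ c₂ c₃)
    (hf : HasCubicExpansion f a₀ a₁ a₂ a₃) :
    HasCubicExpansion (fun v => G (f v)) c₀ (c₁ * a₁) (c₁ * a₂ + c₂ * a₁ ^ 2)
      (c₁ * a₃ + 2 * c₂ * a₁ * a₂ + c₃ * a₁ ^ 3) := by
  have hu : HasCubicExpansion (fun v => f v - a₀) 0 a₁ a₂ a₃ :=
    IsBigO.congr_left hf fun v => by ring
  have hsq := hu.mul hu
  have hpoly := (((const c₀).add (hu.const_mul c₁)).add (hsq.const_mul c₂)).add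
    ((hsq.mul hu).const_mul c₃)
  have hrem : (fun v => G (f v) - (c₀ + c₁ * (f v - a₀) + c₂ * (f v - a₀) ^ 2 +
      c₃ * (f v - a₀) ^ 3)) =O[𝓝 0] fun v => v ^ 4 := by
    have hcomp := IsBigO.comp_tendsto hG (tendsto_sub_nhds_zero_iff.mpr hf.tendsto)
    simp only [Function.comp_def, add_sub_cancel] at hcomp
    exact hcomp.trans (hf.sub_const_isBigO.pow 4)
  exact (hrem.add hpoly).congr_left fun v => by ring

theorem exp (hf : HasCubicExpansion f a₀ a₁ a₂ a₃) :
    HasCubicExpansion (fun v => Real.exp (f v)) (Real.exp a₀) (Real.exp a₀ * a₁)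
      (Real.exp a₀ * (a₂ + a₁ ^ 2 / 2)) (Real.exp a₀ * (a₃ + a₁ * a₂ + a₁ ^ 3 / 6)) := by
  have hexp : HasCubicExpansion Real.exp 1 1 (1 / 2) (1 / 6) := by
    have h := of_hasFPowerSeriesAt
      (Real.exp_eq_exp_ℝ ▸ NormedSpace.exp_hasFPowerSeriesAt_zero (𝕂 := ℝ) (𝔸 := ℝ))
    simp only [NormedSpace.expSeries_eq_ofScalars, FormalMultilinearSeries.coeff_ofScalars] at h
    refine h.congr_coeff ?_ ?_ ?_ ?_ <;> norm_num [Nat.factorial]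
  have hshift := hexp.const_mul (Real.exp a₀)
  simp only [← Real.exp_add] at hshift
  refine (hshift.comp hf).congr_coeff ?_ ?_ ?_ ?_ <;> ring

theorem one_add_rpow (p : ℝ) : HasCubicExpansion (fun v => (1 + v) ^ p) 1 p (p * (p - 1) / 2)
    (p * (p - 1) * (p - 2) / 6) := by
  have hchoose (k : ℕ) : Ring.choose p k = (∏ j ∈ Finset.range k, (p - j)) / k ! := by
    rw [Ring.choose_eq_smul, ← Polynomial.aeval_eq_smeval, Polynomial.aeval_def,
      Polynomial.eval₂_eq_eval_map, descPochhammer_map, descPochhammer_eval_eq_prod_range,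
      smul_eq_mul, inv_mul_eq_div]
  have h := of_hasFPowerSeriesAt (Real.one_add_rpow_hasFPowerSeriesAt_zero (a := p))
  simp only [binomialSeries, FormalMultilinearSeries.coeff_ofScalars, hchoose] at h
  refine h.congr_coeff ?_ ?_ ?_ ?_ <;> norm_num [Finset.prod_range_succ, Nat.factorial]

theorem rpow_of_one (p : ℝ) (hf : HasCubicExpansion f 1 a₁ a₂ a₃) :
    HasCubicExpansion (fun v => f v ^ p) 1 (p * a₁) (p * a₂ + p * (p - 1) / 2 * a₁ ^ 2)
      (p * a₃ + p * (p - 1) * a₁ * a₂ + p * (p - 1) * (p - 2) / 6 * a₁ ^ 3) := by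
  refine (comp (G := (· ^ p)) (one_add_rpow p) hf).congr_coeff rfl rfl rfl ?_
  ring

theorem inv_of_one (hf : HasCubicExpansion f 1 a₁ a₂ a₃) :
    HasCubicExpansion (fun v => (f v)⁻¹) 1 (-a₁) (a₁ ^ 2 - a₂)
      (2 * a₁ * a₂ - a₃ - a₁ ^ 3) := by
  simp only [← Real.rpow_neg_one]
  refine (hf.rpow_of_one (-1)).congr_coeff ?_ ?_ ?_ ?_ <;> ring

theorem inv_sqrt_of_one (hf : HasCubicExpansion f 1 a₁ a₂ a₃) :
    HasCubicExpansion (fun v => (√(f v))⁻¹) 1 (-a₁ / 2) (3 / 8 * a₁ ^ 2 - a₂ / 2)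
      (3 / 4 * a₁ * a₂ - a₃ / 2 - 5 / 16 * a₁ ^ 3) := by
  simp only [Real.sqrt_eq_rpow]
  refine (hf.rpow_of_one (1 / 2)).inv_of_one.congr_coeff ?_ ?_ ?_ ?_ <;> ring

end HasCubicExpansion

/-! ### The Mills ratio of the normal distribution -/

theorem gaussianPDFReal_zero_one (h : ℝ) :
    gaussianPDFReal 0 1 h = Real.exp (-h ^ 2 / 2) / √(2 * π) := by
  rw [gaussianPDFReal, NNReal.coe_one, mul_one, mul_one, sub_zero, inv_mul_eq_div]

theorem hasDerivAt_gaussianPDFReal_zero_one (h : ℝ) :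
    HasDerivAt (gaussianPDFReal 0 1) (-h * gaussianPDFReal 0 1 h) h := by
  have hexponent : HasDerivAt (fun y : ℝ => -y ^ 2 / 2) (-h) h :=
    ((hasDerivAt_pow 2 h).neg.div_const 2).congr_deriv (by norm_num; ring)
  rw [funext gaussianPDFReal_zero_one]
  exact (hexponent.exp.div_const _).congr_deriv (by ring)

theorem tendsto_gaussianPDFReal_zero_one_atTop :
    Tendsto (gaussianPDFReal 0 1) atTop (𝓝 0) := by
  have hexponent : Tendsto (fun h : ℝ => -h ^ 2 / 2) atTop atBot := by
    simp only [neg_div]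
    exact tendsto_neg_atTop_atBot.comp
      ((tendsto_pow_atTop two_ne_zero).atTop_div_const two_pos)
  rw [funext gaussianPDFReal_zero_one, ← zero_div √(2 * π)]
  exact (Real.tendsto_exp_atBot.comp hexponent).div_const _

theorem stdNormalCDF_eq_setIntegral (h : ℝ) :
    stdNormalCDF h = ∫ u in Set.Iic h, gaussianPDFReal 0 1 u := by
  simp only [stdNormalCDF, gaussianPDFReal_zero_one]

theorem stdNormalCDF_eq_cdf : stdNormalCDF = cdf (gaussianReal 0 1) := by
  ext h
  rw [cdf_eq_real, MeasureTheory.measureReal_def, gaussianReal_apply_eq_integral 0 one_ne_zero,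
    ENNReal.toReal_ofReal (MeasureTheory.integral_nonneg (gaussianPDFReal_nonneg 0 1)),
    stdNormalCDF_eq_setIntegral]

theorem tendsto_stdNormalCDF_atTop : Tendsto stdNormalCDF atTop (𝓝 1) :=
  stdNormalCDF_eq_cdf ▸ tendsto_cdf_atTop _

theorem hasDerivAt_stdNormalCDF (h : ℝ) :
    HasDerivAt stdNormalCDF (gaussianPDFReal 0 1 h) h := by
  have hint : ∀ y, MeasureTheory.IntegrableOn (gaussianPDFReal 0 1) (Set.Iic y) :=
    fun _ => (integrable_gaussianPDFReal 0 1).integrableOn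
  have hcont : Continuous (gaussianPDFReal 0 1) := continuous_iff_continuousAt.mpr fun y =>
    (hasDerivAt_gaussianPDFReal_zero_one y).continuousAt
  have hsplit : stdNormalCDF = fun y => (∫ u in (0 : ℝ)..y, gaussianPDFReal 0 1 u) +
      stdNormalCDF 0 := by
    ext y
    rw [← intervalIntegral.integral_Iic_sub_Iic (hint 0) (hint y), stdNormalCDF_eq_setIntegral,
      stdNormalCDF_eq_setIntegral, sub_add_cancel]
  rw [hsplit]
  exact (hcont.integral_hasStrictDerivAt 0 h).hasDerivAt.add_const _

/-- The partial sum `∑_{k < m} (-1)ᵏ (2k - 1)‼ rᵏ` of the divergent expansion of `h` times the Mills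
ratio `(1 - Φ(h)) / φ(h)` in powers of `r = h⁻²`. For `k = 0` the truncated subtraction gives
`(2k - 1)‼ = 0‼ = 1`, the conventional value of `(-1)‼`. -/
noncomputable def millsSum (m : ℕ) (r : ℝ) : ℝ :=
  ∑ k ∈ Finset.range m, (-1) ^ k * ((2 * k - 1)‼ : ℝ) * r ^ k

theorem millsSum_succ (m : ℕ) (r : ℝ) :
    millsSum (m + 1) r = millsSum m r + (-1) ^ m * ((2 * m - 1)‼ : ℝ) * r ^ m :=
  Finset.sum_range_succ _ _

theorem millsSum_four (r : ℝ) : millsSum 4 r = 1 - r + 3 * r ^ 2 - 15 * r ^ 3 := by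
  norm_num only [millsSum, Finset.sum_range_succ, Finset.sum_range_zero, Nat.doubleFactorial]
  ring

-- The derivatives of consecutive terms telescope because `(2m + 1)‼ = (2m + 1) (2m - 1)‼`.
theorem hasDerivAt_mul_millsSum (m : ℕ) {h : ℝ} (hh : h ≠ 0) :
    HasDerivAt (fun y => gaussianPDFReal 0 1 y * y⁻¹ * millsSum m (y⁻¹ ^ 2))
      (-gaussianPDFReal 0 1 h * (1 - (-1) ^ m * ((2 * m - 1)‼ : ℝ) * (h⁻¹ ^ 2) ^ m)) h := by
  induction m with
  | zero => simpa [millsSum] using hasDerivAt_const h (0 : ℝ)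
  | succ m ih =>
    have hfact : ((2 * (m + 1) - 1)‼ : ℝ) = (2 * m + 1) * ((2 * m - 1)‼ : ℝ) := by
      rcases m with _ | m
      · simp
      · exact_mod_cast Nat.doubleFactorial_add_two (2 * m + 1)
    have hterm := ((hasDerivAt_gaussianPDFReal_zero_one h).mul
      ((hasDerivAt_inv hh).pow (2 * m + 1))).const_mul ((-1) ^ m * ((2 * m - 1)‼ : ℝ))
    refine ((ih.add hterm).congr_of_eventuallyEq (.of_forall fun y => ?_)).congr_deriv ?_
    · simp only [millsSum_succ, Pi.add_apply, Pi.mul_apply, Pi.pow_apply]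
      ring
    · rw [hfact]
      simp only [Pi.pow_apply, add_tsub_cancel_right, ← inv_pow]
      push_cast
      linear_combination (-gaussianPDFReal 0 1 h * ((-1) ^ m * ((2 * m - 1)‼ : ℝ)) *
        h⁻¹ ^ (2 * m)) * mul_inv_cancel₀ hh

theorem tendsto_mul_millsSum_atTop (m : ℕ) :
    Tendsto (fun h => gaussianPDFReal 0 1 h * h⁻¹ * millsSum m (h⁻¹ ^ 2)) atTop (𝓝 0) := by
  have hcont : Continuous (fun r : ℝ => r * millsSum m (r ^ 2)) := by
    unfold millsSum
    fun_prop
  have hlim := tendsto_gaussianPDFReal_zero_one_atTop.mul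
    ((hcont.tendsto 0).comp tendsto_inv_atTop_zero)
  simpa only [zero_mul, Function.comp_def, mul_assoc] using hlim

theorem nonneg_of_hasDerivAt_nonpos_of_tendsto_zero {f f' : ℝ → ℝ} {a : ℝ}
    (hf : ∀ y, a ≤ y → HasDerivAt f (f' y) y) (hf' : ∀ y, a ≤ y → f' y ≤ 0)
    (hlim : Tendsto f atTop (𝓝 0)) : 0 ≤ f a := by
  have hanti : AntitoneOn f (Set.Ici a) :=
    antitoneOn_of_hasDerivWithinAt_nonpos (convex_Ici a)
      (fun y hy => (hf y hy).continuousAt.continuousWithinAt)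
      (fun y hy => (hf y (interior_subset hy)).hasDerivWithinAt)
      (fun y hy => hf' y (interior_subset hy))
  exact le_of_tendsto hlim <| (eventually_ge_atTop a).mono fun y hy =>
    hanti Set.self_mem_Ici hy hy

theorem neg_one_pow_mul_normalTail_sub_nonneg (m : ℕ) {h : ℝ} (hh : 0 < h) :
    0 ≤ (-1) ^ m * (1 - stdNormalCDF h -
      gaussianPDFReal 0 1 h * h⁻¹ * millsSum m (h⁻¹ ^ 2)) := by
  refine nonneg_of_hasDerivAt_nonpos_of_tendsto_zero
    (f := fun y => (-1) ^ m * (1 - stdNormalCDF y -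
      gaussianPDFReal 0 1 y * y⁻¹ * millsSum m (y⁻¹ ^ 2)))
    (f' := fun y => -(gaussianPDFReal 0 1 y * (((2 * m - 1)‼ : ℝ) * (y⁻¹ ^ 2) ^ m)))
    (fun y hy => ?_) (fun y _ => ?_) ?_
  · have hsign : (-1 : ℝ) ^ m * (-1) ^ m = 1 := by simp [← mul_pow]
    refine (((hasDerivAt_stdNormalCDF y).const_sub 1).sub
      (hasDerivAt_mul_millsSum m (hh.trans_le hy).ne')).const_mul ((-1) ^ m) |>.congr_deriv ?_
    linear_combination (-gaussianPDFReal 0 1 y * ((2 * m - 1)‼ : ℝ) * (y⁻¹ ^ 2) ^ m) * hsign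
  · have := gaussianPDFReal_nonneg 0 1 y
    exact neg_nonpos.mpr (by positivity)
  · simpa using ((tendsto_stdNormalCDF_atTop.const_sub 1).sub
      (tendsto_mul_millsSum_atTop m)).const_mul ((-1) ^ m)

theorem abs_normalTail_sub_le (m : ℕ) {h : ℝ} (hh : 0 < h) :
    |1 - stdNormalCDF h - gaussianPDFReal 0 1 h * h⁻¹ * millsSum m (h⁻¹ ^ 2)| ≤
      gaussianPDFReal 0 1 h * h⁻¹ * (((2 * m - 1)‼ : ℝ) * (h⁻¹ ^ 2) ^ m) := by
  have hnonneg := neg_one_pow_mul_normalTail_sub_nonneg m hh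
  have hnext := neg_one_pow_mul_normalTail_sub_nonneg (m + 1) hh
  rw [millsSum_succ] at hnext
  have hsign : (-1 : ℝ) ^ m * (-1) ^ m = 1 := by simp [← mul_pow]
  set δ := 1 - stdNormalCDF h - gaussianPDFReal 0 1 h * h⁻¹ * millsSum m (h⁻¹ ^ 2)
  calc |δ| = |(-1) ^ m * δ| := by rw [abs_mul, abs_neg_one_pow, one_mul]
    _ = (-1) ^ m * δ := abs_of_nonneg hnonneg
    _ ≤ gaussianPDFReal 0 1 h * h⁻¹ * (((2 * m - 1)‼ : ℝ) * (h⁻¹ ^ 2) ^ m) := by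
      linear_combination hnext + (gaussianPDFReal 0 1 h * h⁻¹ * ((2 * m - 1)‼ : ℝ) *
        (h⁻¹ ^ 2) ^ m) * hsign

/-! ### Poisson approximation -/

theorem log_one_sub_add_isBigO :
    (fun v : ℝ => Real.log (1 - v) + v) =O[𝓝 0] fun v => v ^ 2 := by
  refine IsBigO.of_bound 2 ?_
  filter_upwards [Metric.ball_mem_nhds (0 : ℝ) one_half_pos] with v hv
  have hv : |v| < 1 / 2 := by simpa using hv
  have hlog : |v + Real.log (1 - v)| ≤ v ^ 2 / (1 - |v|) := by
    simpa [one_add_one_eq_two] using Real.abs_log_sub_add_sum_range_le (hv.trans (by norm_num)) 1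
  calc ‖Real.log (1 - v) + v‖ ≤ v ^ 2 / (1 - |v|) := by rwa [Real.norm_eq_abs, add_comm]
    _ ≤ v ^ 2 / (1 / 2) := by
      gcongr
      linarith
    _ = 2 * ‖v ^ 2‖ := by
      rw [Real.norm_of_nonneg (sq_nonneg v)]
      ring

section PoissonApproximation

variable {T : ℕ → ℝ}

theorem div_natCast_isBigO (hT : T =O[atTop] fun _ => (1 : ℝ)) :
    (fun n : ℕ => T n / n) =O[atTop] fun n : ℕ => (n : ℝ)⁻¹ := by
  simpa only [div_eq_mul_inv, one_mul] using
    hT.mul (isBigO_refl (fun n : ℕ => (n : ℝ)⁻¹) atTop)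

theorem div_natCast_pow_pred_isBigO (hT : T =O[atTop] fun _ => (1 : ℝ)) :
    (fun n : ℕ => (T n / n) ^ (n - 1)) =O[atTop] fun n : ℕ => (n : ℝ)⁻¹ := by
  have hv := div_natCast_isBigO hT
  have hzero := hv.trans_tendsto tendsto_inv_atTop_nhds_zero_nat
  refine (IsBigO.of_bound 1 ?_).trans hv
  filter_upwards [hzero.norm.eventually_lt_const (u := 1) (by simp),
    eventually_ge_atTop 2] with n hlt hn
  rw [norm_pow, one_mul]
  exact pow_le_of_le_one (norm_nonneg _) hlt.le (by omega)

theorem pred_mul_log_one_sub_div_add_isBigO (hT : T =O[atTop] fun _ => (1 : ℝ)) :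
    (fun n : ℕ => ((n : ℝ) - 1) * Real.log (1 - T n / n) + T n) =O[atTop]
      fun n : ℕ => (n : ℝ)⁻¹ := by
  have hv := div_natCast_isBigO hT
  have hlog := (log_one_sub_add_isBigO.comp_tendsto
    (hv.trans_tendsto tendsto_inv_atTop_nhds_zero_nat)).trans (hv.pow 2)
  have hpred : (fun n : ℕ => (n : ℝ) - 1) =O[atTop] fun n : ℕ => (n : ℝ) :=
    IsBigO.of_bound 1 <| (eventually_ge_atTop 1).mono fun n hn => by
      have : (1 : ℝ) ≤ n := by exact_mod_cast hn
      rw [Real.norm_of_nonneg (by linarith), Real.norm_of_nonneg (by linarith)]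
      linarith
  have hprod : (fun n : ℕ => ((n : ℝ) - 1) * (Real.log (1 - T n / n) + T n / n)) =O[atTop]
      fun n : ℕ => (n : ℝ)⁻¹ := by
    refine (hpred.mul hlog).congr' .rfl ?_
    filter_upwards [eventually_ne_atTop 0] with n hn
    field_simp
  refine (hprod.add hv).congr' ?_ .rfl
  filter_upwards [eventually_ne_atTop 0] with n hn
  field_simp
  ring

theorem exp_neg_isBigO_one (hT : T =O[atTop] fun _ => (1 : ℝ)) :
    (fun n => Real.exp (-T n)) =O[atTop] fun _ => (1 : ℝ) := by
  refine Real.isBigO_exp_comp_one.mpr (((isBigO_one_iff ℝ).mp hT).mono_le ?_)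
  exact .of_forall fun n => neg_le_abs (T n)

theorem one_sub_div_pow_pred_sub_exp_neg_isBigO (hT : T =O[atTop] fun _ => (1 : ℝ)) :
    (fun n : ℕ => (1 - T n / n) ^ (n - 1) - Real.exp (-T n)) =O[atTop]
      fun n : ℕ => (n : ℝ)⁻¹ := by
  have hzero := tendsto_inv_atTop_nhds_zero_nat (𝕜 := ℝ)
  have hexponent := pred_mul_log_one_sub_div_add_isBigO hT
  have hexp : (fun n : ℕ => Real.exp (((n : ℝ) - 1) * Real.log (1 - T n / n) + T n) - 1)
      =O[atTop] fun n : ℕ => (n : ℝ)⁻¹ := by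
    have h := (Real.hasDerivAt_exp 0).isBigO_sub.comp_tendsto (hexponent.trans_tendsto hzero)
    simp only [Function.comp_def, Real.exp_zero, sub_zero] at h
    exact h.trans hexponent
  refine ((exp_neg_isBigO_one hT).mul hexp).congr' ?_ (.of_forall fun n => one_mul _)
  filter_upwards [((div_natCast_isBigO hT).trans_tendsto hzero).eventually_lt_const one_pos,
    eventually_ge_atTop 1] with n hlt hn
  calc Real.exp (-T n) * (Real.exp (((n : ℝ) - 1) * Real.log (1 - T n / n) + T n) - 1)
      = Real.exp (((n - 1 : ℕ) : ℝ) * Real.log (1 - T n / n)) - Real.exp (-T n) := by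
        rw [mul_sub, ← Real.exp_add, mul_one, Nat.cast_sub hn, Nat.cast_one]
        congr 2
        ring
    _ = (1 - T n / n) ^ (n - 1) - Real.exp (-T n) := by
        rw [Real.exp_nat_mul, Real.exp_log (sub_pos.mpr hlt)]

end PoissonApproximation

/-! ### The norming sequence -/

/-- The norming sequence of the paper: `b n` is the positive solution of `2π b² exp(b²) = n²`,
equivalently `n φ(b) = b`. -/
def IsGumbelNorming (b : ℕ → ℝ) : Prop :=
  ∀ n : ℕ, 1 ≤ n → 0 < b n ∧ 2 * π * b n ^ 2 * Real.exp (b n ^ 2) = (n : ℝ) ^ 2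

namespace IsGumbelNorming

variable {b : ℕ → ℝ}

theorem natCast_mul_gaussianPDFReal (hb : IsGumbelNorming b) {n : ℕ} (hn : 1 ≤ n) :
    n * gaussianPDFReal 0 1 (b n) = b n := by
  obtain ⟨hpos, heq⟩ := hb n hn
  have hsqrt : (n : ℝ) = √(2 * π) * b n * Real.exp (b n ^ 2 / 2) := by
    rw [← Real.sqrt_sq n.cast_nonneg, ← heq, Real.sqrt_mul (by positivity),
      Real.sqrt_mul (by positivity), Real.sqrt_sq hpos.le, Real.exp_half]
  rw [gaussianPDFReal_zero_one, hsqrt, neg_div, Real.exp_neg]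
  field_simp

theorem tendsto_sq_atTop (hb : IsGumbelNorming b) : Tendsto (fun n => b n ^ 2) atTop atTop := by
  refine tendsto_atTop.mpr fun M => ?_
  have hlarge : ∀ᶠ n : ℕ in atTop, 2 * π * M * Real.exp M < (n : ℝ) ^ 2 :=
    ((tendsto_pow_atTop two_ne_zero).comp tendsto_natCast_atTop_atTop).eventually_gt_atTop _
  filter_upwards [hlarge, eventually_ge_atTop 1] with n hlt hn
  by_contra! hle
  rw [← (hb n hn).2] at hlt
  have hM : 0 ≤ M := (sq_nonneg _).trans hle.le
  exact hlt.not_ge (by gcongr)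

theorem tendsto_inv_sq (hb : IsGumbelNorming b) : Tendsto (fun n => (b n ^ 2)⁻¹) atTop (𝓝 0) :=
  tendsto_inv_atTop_zero.comp hb.tendsto_sq_atTop

theorem inv_natCast_isBigO (hb : IsGumbelNorming b) (m : ℕ) :
    (fun n : ℕ => (n : ℝ)⁻¹) =O[atTop] fun n => (b n ^ 2)⁻¹ ^ m := by
  refine IsBigO.of_pow two_ne_zero ?_
  have hexp : (fun n => Real.exp (-(b n ^ 2))) =O[atTop] fun n => (b n ^ 2)⁻¹ ^ (2 * m) := by
    have h := (isLittleO_exp_neg_mul_rpow_atTop one_pos (-(2 * m : ℕ))).isBigO.comp_tendsto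
      hb.tendsto_sq_atTop
    simpa only [Function.comp_def, neg_one_mul, Real.rpow_neg (sq_nonneg _), Real.rpow_natCast,
      inv_pow] using h
  have hinv := (hb.tendsto_inv_sq.isBigO_one ℝ).const_mul_left (2 * π)⁻¹
  refine (hinv.mul hexp).congr' ?_ (.of_forall fun n => ?_)
  · filter_upwards [eventually_ge_atTop 1] with n hn
    rw [Pi.pow_apply, inv_pow, ← (hb n hn).2, Real.exp_neg]
    simp only [mul_inv]
  · simp only [one_mul, Pi.pow_apply, ← pow_mul, mul_comm m]

end IsGumbelNorming

/-! ### The density of the squared maximum -/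

/-- The distribution function `F_n` of `(|M_n|² - d) / c`, where `M_n` is the maximum of `n`
independent standard normal variables. -/
noncomputable def squaredMaxCDF (n : ℕ) (c d y : ℝ) : ℝ :=
  stdNormalCDF ((c * y + d) ^ ((1 : ℝ) / 2)) ^ n -
    (1 - stdNormalCDF ((c * y + d) ^ ((1 : ℝ) / 2))) ^ n

section SquaredMax

variable {c d x : ℝ}

theorem hasDerivAt_stdNormalCDF_sqrt_affine (h : 0 < c * x + d) :
    HasDerivAt (fun y => stdNormalCDF √(c * y + d))
      (gaussianPDFReal 0 1 √(c * x + d) * (√(c * x + d))⁻¹ * (c / 2)) x := by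
  have haffine : HasDerivAt (fun y => c * y + d) c x := by
    simpa using ((hasDerivAt_id x).const_mul c).add_const d
  refine ((hasDerivAt_stdNormalCDF _).comp x (haffine.sqrt h.ne')).congr_deriv ?_
  field_simp

theorem deriv_squaredMaxCDF (n : ℕ) (h : 0 < c * x + d) :
    deriv (squaredMaxCDF n c d) x =
      n * gaussianPDFReal 0 1 √(c * x + d) * (√(c * x + d))⁻¹ * (c / 2) *
        (stdNormalCDF √(c * x + d) ^ (n - 1) + (1 - stdNormalCDF √(c * x + d)) ^ (n - 1)) := by
  have hcdf := hasDerivAt_stdNormalCDF_sqrt_affine h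
  have hF : squaredMaxCDF n c d =
      fun y => stdNormalCDF √(c * y + d) ^ n - (1 - stdNormalCDF √(c * y + d)) ^ n := by
    ext y
    simp only [squaredMaxCDF, Real.sqrt_eq_rpow]
  rw [hF]
  refine (((hcdf.pow n).sub ((hcdf.const_sub 1).pow n)).congr_deriv ?_).deriv
  ring

end SquaredMax

/-- `h² / b²` as a function of `ε = b⁻²`, where `h² = (2 - 2ε) x + b² - 2ε` is the squared
threshold. -/
noncomputable def sqRatio (x ε : ℝ) : ℝ := 1 + 2 * x * ε - 2 * (1 + x) * ε ^ 2

/-- `n φ(h) / h` as a function of `ε = b⁻²`. -/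
noncomputable def leadingTail (x ε : ℝ) : ℝ := Real.exp ((1 + x) * ε - x) / √(sqRatio x ε)

/-- The approximation of `n (1 - Φ(h))` by `m` terms of the Mills ratio expansion, as a function of
`ε = b⁻²`. -/
noncomputable def scaledTail (m : ℕ) (x ε : ℝ) : ℝ :=
  leadingTail x ε * millsSum m (ε / sqRatio x ε)

/-- The approximation of the density `F_n'(x)` obtained from `m` terms of the Mills ratio expansion,
as a function of `ε = b⁻²`. -/
noncomputable def densityProfile (m : ℕ) (x ε : ℝ) : ℝ :=
  leadingTail x ε * (1 - ε) * Real.exp (-scaledTail m x ε)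

section CubicExpansions

open HasCubicExpansion

variable (x : ℝ)

theorem hasCubicExpansion_sqRatio :
    HasCubicExpansion (sqRatio x) 1 (2 * x) (-2 * (1 + x)) 0 := by
  convert polynomial 1 (2 * x) (-2 * (1 + x)) 0 using 2 with ε
  rw [sqRatio]
  ring

theorem hasCubicExpansion_leadingTail :
    HasCubicExpansion (leadingTail x) (Real.exp (-x)) (Real.exp (-x))
      (Real.exp (-x) * (3 / 2 + x + x ^ 2))
      (Real.exp (-x) * (7 / 6 - x - x ^ 2 - 4 / 3 * x ^ 3)) := by
  have hexponent : HasCubicExpansion (fun ε => (1 + x) * ε - x) (-x) (1 + x) 0 0 := by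
    convert polynomial (-x) (1 + x) 0 0 using 2 with ε
    ring
  refine (hexponent.exp.mul (hasCubicExpansion_sqRatio x).inv_sqrt_of_one).congr_coeff
    ?_ ?_ ?_ ?_ <;> ring

theorem hasCubicExpansion_div_sqRatio :
    HasCubicExpansion (fun ε => ε / sqRatio x ε) 0 1 (-2 * x) (4 * x ^ 2 + 2 * x + 2) := by
  have hid : HasCubicExpansion (fun ε => ε) 0 1 0 0 := by
    simpa using polynomial 0 1 0 0
  refine (hid.mul (hasCubicExpansion_sqRatio x).inv_of_one).congr_coeff ?_ ?_ ?_ ?_ <;> ring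

theorem hasCubicExpansion_scaledTail_four :
    HasCubicExpansion (scaledTail 4 x) (Real.exp (-x)) 0
      (Real.exp (-x) * (7 / 2 + 3 * x + x ^ 2))
      (-(Real.exp (-x) * (43 / 3 + 14 * x + 6 * x ^ 2 + 4 / 3 * x ^ 3))) := by
  have hmills : HasCubicExpansion (fun r => millsSum 4 (0 + r)) 1 (-1) 3 (-15) := by
    convert polynomial 1 (-1) 3 (-15) using 2 with r
    rw [millsSum_four]
    ring
  refine ((hasCubicExpansion_leadingTail x).mul
    (hmills.comp (hasCubicExpansion_div_sqRatio x))).congr_coeff ?_ ?_ ?_ ?_ <;> ring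

theorem hasCubicExpansion_densityProfile_four :
    HasCubicExpansion (densityProfile 4 x) (gumbel x * Real.exp (-x)) 0
      (gumbel x * Real.exp (-x) *
        (1 / 2 + x + x ^ 2 - Real.exp (-x) * (7 / 2 + 3 * x + x ^ 2)))
      (gumbel x * Real.exp (-x) *
        (Real.exp (-x) * (43 / 3 + 14 * x + 6 * x ^ 2 + 4 / 3 * x ^ 3) -
          (1 / 3 + 2 * x + 2 * x ^ 2 + 4 / 3 * x ^ 3))) := by
  have hscale : HasCubicExpansion (fun ε => 1 - ε) 1 (-1) 0 0 := by
    convert polynomial 1 (-1) 0 0 using 2 with ε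
    ring
  rw [gumbel]
  refine (((hasCubicExpansion_leadingTail x).mul hscale).mul
    (hasCubicExpansion_scaledTail_four x).neg.exp).congr_coeff ?_ ?_ ?_ ?_ <;> ring

end CubicExpansions

theorem tendsto_scaledTail {m : ℕ} (hm : m ≠ 0) (x : ℝ) :
    Tendsto (scaledTail m x) (𝓝 0) (𝓝 (Real.exp (-x))) := by
  have hmills : Tendsto (millsSum m) (𝓝 0) (𝓝 1) := by
    have hcont : Continuous (millsSum m) := by
      unfold millsSum
      fun_prop
    have hzero : millsSum m 0 = 1 := by
      obtain ⟨k, rfl⟩ := Nat.exists_eq_succ_of_ne_zero hm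
      simp [millsSum, Finset.sum_range_succ']
    exact hzero ▸ hcont.tendsto 0
  rw [← mul_one (Real.exp (-x))]
  exact (hasCubicExpansion_leadingTail x).tendsto.mul
    (hmills.comp (hasCubicExpansion_div_sqRatio x).tendsto)

/-- The threshold `h = (c x + d)^{1/2}` of the paper, where `c = 2 - 2 b⁻²` and
`d = b² - 2 b⁻²`. -/
noncomputable def threshold (b x : ℝ) : ℝ := √((2 - 2 / b ^ 2) * x + (b ^ 2 - 2 / b ^ 2))

section Threshold

variable {b x : ℝ}

theorem affine_eq_sq_mul_sqRatio (hb : b ≠ 0) :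
    (2 - 2 / b ^ 2) * x + (b ^ 2 - 2 / b ^ 2) = b ^ 2 * sqRatio x (b ^ 2)⁻¹ := by
  rw [sqRatio]
  field_simp
  ring

theorem threshold_eq_mul_sqrt (hb : 0 < b) : threshold b x = b * √(sqRatio x (b ^ 2)⁻¹) := by
  rw [threshold, affine_eq_sq_mul_sqRatio hb.ne', Real.sqrt_mul (sq_nonneg b), Real.sqrt_sq hb.le]

theorem inv_threshold_sq (hb : 0 < b) (hx : 0 ≤ sqRatio x (b ^ 2)⁻¹) :
    (threshold b x)⁻¹ ^ 2 = (b ^ 2)⁻¹ / sqRatio x (b ^ 2)⁻¹ := by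
  rw [threshold_eq_mul_sqrt hb, inv_pow, mul_pow, Real.sq_sqrt hx, mul_inv, div_eq_mul_inv]

theorem gaussianPDFReal_threshold (hb : 0 < b) (hx : 0 ≤ sqRatio x (b ^ 2)⁻¹) :
    gaussianPDFReal 0 1 (threshold b x) =
      gaussianPDFReal 0 1 b * Real.exp ((1 + x) * (b ^ 2)⁻¹ - x) := by
  rw [gaussianPDFReal_zero_one, gaussianPDFReal_zero_one, div_mul_eq_mul_div, ← Real.exp_add,
    threshold_eq_mul_sqrt hb, mul_pow, Real.sq_sqrt hx, sqRatio]
  congr 2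
  field_simp
  ring

end Threshold

namespace IsGumbelNorming

variable {b : ℕ → ℝ} {m : ℕ}

theorem eventually_sqRatio_pos (hb : IsGumbelNorming b) (x : ℝ) :
    ∀ᶠ n in atTop, 0 < sqRatio x (b n ^ 2)⁻¹ :=
  ((hasCubicExpansion_sqRatio x).tendsto.comp hb.tendsto_inv_sq).eventually_const_lt one_pos

theorem natCast_mul_gaussianPDFReal_threshold (hb : IsGumbelNorming b) {n : ℕ} (hn : 1 ≤ n) {x : ℝ}
    (hx : 0 ≤ sqRatio x (b n ^ 2)⁻¹) :
    n * gaussianPDFReal 0 1 (threshold (b n) x) * (threshold (b n) x)⁻¹ =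
      leadingTail x (b n ^ 2)⁻¹ := by
  have hpos := (hb n hn).1
  rw [gaussianPDFReal_threshold hpos hx, ← mul_assoc, hb.natCast_mul_gaussianPDFReal hn,
    threshold_eq_mul_sqrt hpos, leadingTail]
  field_simp

theorem abs_natCast_mul_normalTail_sub_scaledTail_le (hb : IsGumbelNorming b) (m : ℕ) {n : ℕ}
    (hn : 1 ≤ n) {x : ℝ} (hx : 0 < sqRatio x (b n ^ 2)⁻¹) :
    |n * (1 - stdNormalCDF (threshold (b n) x)) - scaledTail m x (b n ^ 2)⁻¹| ≤
      leadingTail x (b n ^ 2)⁻¹ *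
        (((2 * m - 1)‼ : ℝ) * ((b n ^ 2)⁻¹ / sqRatio x (b n ^ 2)⁻¹) ^ m) := by
  have hpos := (hb n hn).1
  have hthreshold : 0 < threshold (b n) x := by
    rw [threshold_eq_mul_sqrt hpos]
    positivity
  rw [scaledTail, ← hb.natCast_mul_gaussianPDFReal_threshold hn hx.le,
    ← inv_threshold_sq hpos hx.le]
  set h := threshold (b n) x
  calc |n * (1 - stdNormalCDF h) - n * gaussianPDFReal 0 1 h * h⁻¹ * millsSum m (h⁻¹ ^ 2)|
      = n * |1 - stdNormalCDF h - gaussianPDFReal 0 1 h * h⁻¹ * millsSum m (h⁻¹ ^ 2)| := by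
        rw [← Nat.abs_cast n, ← abs_mul, Nat.abs_cast]
        ring_nf
    _ ≤ n * (gaussianPDFReal 0 1 h * h⁻¹ * (((2 * m - 1)‼ : ℝ) * (h⁻¹ ^ 2) ^ m)) :=
        mul_le_mul_of_nonneg_left (abs_normalTail_sub_le m hthreshold) n.cast_nonneg
    _ = n * gaussianPDFReal 0 1 h * h⁻¹ * (((2 * m - 1)‼ : ℝ) * (h⁻¹ ^ 2) ^ m) := by
        simp only [mul_assoc]

theorem natCast_mul_normalTail_sub_scaledTail_isBigO (hb : IsGumbelNorming b) (m : ℕ) (x : ℝ) :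
    (fun n : ℕ => n * (1 - stdNormalCDF (threshold (b n) x)) - scaledTail m x (b n ^ 2)⁻¹)
      =O[atTop] fun n => (b n ^ 2)⁻¹ ^ m := by
  have hleading := ((hasCubicExpansion_leadingTail x).tendsto.comp hb.tendsto_inv_sq).isBigO_one ℝ
  have hpow := (((hasCubicExpansion_div_sqRatio x).sub_const_isBigO.comp_tendsto
    hb.tendsto_inv_sq).pow m).const_mul_left ((2 * m - 1)‼ : ℝ)
  simp only [Function.comp_def, sub_zero] at hleading hpow
  refine (IsBigO.of_bound' ?_).trans ((hleading.mul hpow).congr_right fun n => one_mul _)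
  filter_upwards [hb.eventually_sqRatio_pos x, eventually_ge_atTop 1] with n hx hn
  exact (hb.abs_natCast_mul_normalTail_sub_scaledTail_le m hn hx).trans (Real.le_norm_self _)

theorem natCast_mul_normalTail_isBigO_one (hb : IsGumbelNorming b) (x : ℝ) :
    (fun n : ℕ => n * (1 - stdNormalCDF (threshold (b n) x))) =O[atTop] fun _ => (1 : ℝ) := by
  simpa [scaledTail, millsSum] using hb.natCast_mul_normalTail_sub_scaledTail_isBigO 0 x

theorem exp_neg_natCast_mul_normalTail_sub_isBigO (hb : IsGumbelNorming b) (hm : m ≠ 0) (x : ℝ) :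
    (fun n : ℕ => Real.exp (-(n * (1 - stdNormalCDF (threshold (b n) x)))) -
      Real.exp (-scaledTail m x (b n ^ 2)⁻¹)) =O[atTop] fun n => (b n ^ 2)⁻¹ ^ m := by
  have hsub := hb.natCast_mul_normalTail_sub_scaledTail_isBigO m x
  have hscaled := (tendsto_scaledTail hm x).comp hb.tendsto_inv_sq
  have htail : Tendsto (fun n : ℕ => n * (1 - stdNormalCDF (threshold (b n) x))) atTop
      (𝓝 (Real.exp (-x))) := by
    have hpow : Tendsto (fun n => (b n ^ 2)⁻¹ ^ m) atTop (𝓝 0) := by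
      simpa [hm] using hb.tendsto_inv_sq.pow m
    simpa using (hsub.trans_tendsto hpow).add hscaled
  have hexp := (Real.hasStrictDerivAt_exp _).hasStrictFDerivAt.isBigO_sub.comp_tendsto
    (htail.neg.prodMk_nhds hscaled.neg)
  exact hexp.trans (hsub.neg_left.congr_left fun n => by simp [neg_add_eq_sub])

theorem stdNormalCDF_pow_pred_add_sub_isBigO (hb : IsGumbelNorming b) (hm : m ≠ 0) (x : ℝ) :
    (fun n : ℕ => stdNormalCDF (threshold (b n) x) ^ (n - 1) +
      (1 - stdNormalCDF (threshold (b n) x)) ^ (n - 1) - Real.exp (-scaledTail m x (b n ^ 2)⁻¹))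
      =O[atTop] fun n => (b n ^ 2)⁻¹ ^ m := by
  have hbounded := hb.natCast_mul_normalTail_isBigO_one x
  have hpow := (one_sub_div_pow_pred_sub_exp_neg_isBigO hbounded).add
    (div_natCast_pow_pred_isBigO hbounded)
  refine ((hpow.trans (hb.inv_natCast_isBigO m)).add
    (hb.exp_neg_natCast_mul_normalTail_sub_isBigO hm x)).congr' ?_ .rfl
  filter_upwards [eventually_ne_atTop 0] with n hn
  rw [mul_div_cancel_left₀ _ (Nat.cast_ne_zero.mpr hn), sub_sub_cancel]
  ring

theorem eventually_affine_pos (hb : IsGumbelNorming b) (x : ℝ) :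
    ∀ᶠ n in atTop, 0 < (2 - 2 / b n ^ 2) * x + (b n ^ 2 - 2 / b n ^ 2) := by
  filter_upwards [hb.eventually_sqRatio_pos x, eventually_ge_atTop 1] with n hx hn
  have hpos := (hb n hn).1
  rw [affine_eq_sq_mul_sqRatio hpos.ne']
  positivity

theorem deriv_squaredMaxCDF_sub_densityProfile_isBigO (hb : IsGumbelNorming b) (hm : m ≠ 0)
    (x : ℝ) :
    (fun n : ℕ => deriv (squaredMaxCDF n (2 - 2 / b n ^ 2) (b n ^ 2 - 2 / b n ^ 2)) x -
      densityProfile m x (b n ^ 2)⁻¹) =O[atTop] fun n => (b n ^ 2)⁻¹ ^ m := by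
  have hprefactor : (fun n => leadingTail x (b n ^ 2)⁻¹ * (1 - (b n ^ 2)⁻¹)) =O[atTop]
      fun _ => (1 : ℝ) :=
    (((hasCubicExpansion_leadingTail x).tendsto.comp hb.tendsto_inv_sq).mul
      (hb.tendsto_inv_sq.const_sub 1)).isBigO_one ℝ
  refine (hprefactor.mul (hb.stdNormalCDF_pow_pred_add_sub_isBigO hm x)).congr' ?_
    (.of_forall fun n => one_mul _)
  filter_upwards [hb.eventually_sqRatio_pos x, hb.eventually_affine_pos x, eventually_ge_atTop 1]
    with n hx haffine hn
  rw [deriv_squaredMaxCDF n haffine, ← threshold,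
    hb.natCast_mul_gaussianPDFReal_threshold hn hx.le, densityProfile]
  ring

theorem deriv_squaredMaxCDF_sub_cubic_isBigO (hb : IsGumbelNorming b) (x : ℝ) :
    (fun n : ℕ => deriv (squaredMaxCDF n (2 - 2 / b n ^ 2) (b n ^ 2 - 2 / b n ^ 2)) x -
      gumbel x * Real.exp (-x) *
        (1 + (1 / 2 + x + x ^ 2 - Real.exp (-x) * (7 / 2 + 3 * x + x ^ 2)) / b n ^ 4 +
          (Real.exp (-x) * (43 / 3 + 14 * x + 6 * x ^ 2 + 4 / 3 * x ^ 3) -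
            (1 / 3 + 2 * x + 2 * x ^ 2 + 4 / 3 * x ^ 3)) / b n ^ 6)) =O[atTop]
      fun n => 1 / b n ^ 8 := by
  have hprofile := IsBigO.comp_tendsto (hasCubicExpansion_densityProfile_four x) hb.tendsto_inv_sq
  refine ((hb.deriv_squaredMaxCDF_sub_densityProfile_isBigO four_ne_zero x).add hprofile).congr
    (fun n => ?_) fun n => ?_
  · simp only [Function.comp_apply, inv_pow, ← pow_mul]
    ring
  · rw [inv_pow, ← pow_mul, one_div]

end IsGumbelNorming

/-- Theorem 2.2, `t = 2`: With `b_n` the unique positive solution of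
`2π b_n² exp(b_n²) = n²`, `c_n = 2 − 2b_n^{−2}`, `d_n = b_n² − 2b_n^{−2}` and
`F_n(y) = Φ((c_n y + d_n)^{1/2})^n − (1 − Φ((c_n y + d_n)^{1/2}))^n`:
`F_n'(x) = Λ(x) e^{−x}(1 + b_n^{−4}(ϖ + b_n^{−2} τ + O(b_n^{−4})))`, where
`ϖ = 1/2 + x + x² − e^{−x}(7/2 + 3x + x²)` and
`τ = e^{−x}(43/3 + 14x + 6x² + (4/3)x³) − (1/3 + 2x + 2x² + (4/3)x³)`. -/
theorem powered_extremes_density_higher_order_expansion_t_eq_two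
    (b : ℕ → ℝ)
    (hb : ∀ n : ℕ, 1 ≤ n → 0 < b n ∧
      2 * Real.pi * (b n) ^ 2 * Real.exp ((b n) ^ 2) = (n : ℝ) ^ 2)
    (x : ℝ)
    (c d : ℕ → ℝ)
    (hc : ∀ n : ℕ, c n = 2 - 2 / (b n) ^ 2)
    (hd : ∀ n : ℕ, d n = (b n) ^ 2 - 2 / (b n) ^ 2) :
    ∃ C > (0 : ℝ), ∃ N : ℕ, ∀ n : ℕ, N ≤ n →
      0 < c n * x + d n ∧
      |deriv (fun y : ℝ =>
          stdNormalCDF ((c n * y + d n) ^ ((1 : ℝ) / 2)) ^ n -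
            (1 - stdNormalCDF ((c n * y + d n) ^ ((1 : ℝ) / 2))) ^ n) x -
        gumbel x * Real.exp (-x) *
          (1 + (1 / 2 + x + x ^ 2 -
              Real.exp (-x) * (7 / 2 + 3 * x + x ^ 2)) / (b n) ^ 4 +
            (Real.exp (-x) * (43 / 3 + 14 * x + 6 * x ^ 2 + 4 / 3 * x ^ 3) -
              (1 / 3 + 2 * x + 2 * x ^ 2 + 4 / 3 * x ^ 3)) / (b n) ^ 6)|
      ≤ C / (b n) ^ 8 := by
  have hb : IsGumbelNorming b := hb
  obtain ⟨C, hC, hbound⟩ := (hb.deriv_squaredMaxCDF_sub_cubic_isBigO x).exists_pos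
  obtain ⟨N, hN⟩ := eventually_atTop.mp ((hb.eventually_affine_pos x).and hbound.bound)
  refine ⟨C, hC, N, fun n hn => ?_⟩
  obtain ⟨hpos, hle⟩ := hN n hn
  rw [hc, hd]
  refine ⟨hpos, hle.trans_eq ?_⟩
  rw [Real.norm_of_nonneg (by positivity), mul_one_div]
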